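/- Preservation for remove (the E-Remove case of Theorem 1): if Γ ⊨ σ, the statement y.remove() type checks under Γ by rule T-Remove (with c the AST counter of y.remove(), for every (w : τw) ∈ Γ the implication from the refinement of τw[w/self] to the refinement of τw[w/self][(len(y)−1)/len(y), (c+1)/c] is valid), σ(y) is a nonempty list, and ⟨σ, y.remove()⟩ → ⟨σ', skip⟩ by rule E-Remove (σ' is σ with the last element of the list σ(y) removed and with c incremented), then Γ ⊨ σ'. -/

import Mathlib

/-! The refinement-satisfaction part is a substitution lemma: evaluating a refinement in the
environment after the step, with `w` for `self`, agrees with evaluating its image under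
`[w/self]` followed by `[(len(y)-1)/len(y), (c+1)/c]` in the environment before the step
(`rsat_removeSubst`). Besides the counter `c`, only the length of the list stored in `y` is
observable by a refinement: integer, boolean, index and `iterOf` observations of a list value do
not depend on the list. Given `Γ ⊨ σ`, the validity premise of the typing rule then transports
each refinement. The base types are preserved because removing an element keeps the remaining
ones well typed. -/

namespace QuantmBound

/-! ## Base types and values of the core calculus (paper Fig. 2) -/

/-- Base types: `int`, `bool`, `Iterator⟨β⟩`, `List⟨β⟩`. -/
inductive BaseTy : Type
  | int
  | bool
  | iterator (β : BaseTy)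
  | list (β : BaseTy)
  deriving DecidableEq

/-- Runtime values: integers, booleans, iterator values `iter(i, y)`
    and list values `[v₁,…,vₙ]`. -/
inductive Val : Type
  | int (n : ℤ)
  | bool (b : Bool)
  | iter (i : ℕ) (y : String)
  | list (l : List Val)

def Val.asInt : Val → ℤ
  | .int n => n
  | _ => 0

def Val.asBool : Val → Bool
  | .bool b => b
  | _ => false

/-- The length of a list value. -/
def Val.lenZ : Val → ℤ
  | .list l => (l.length : ℤ)
  | _ => 0

/-- The current index of an iterator value. -/
def Val.idxZ : Val → ℤ
  | .iter i _ => (i : ℤ)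
  | _ => 0

/-- Conformance of a value to a base type. -/
inductive ValHasBase : Val → BaseTy → Prop
  | int (n : ℤ) : ValHasBase (.int n) .int
  | bool (b : Bool) : ValHasBase (.bool b) .bool
  | iter (i : ℕ) (y : String) (β : BaseTy) : ValHasBase (.iter i y) (.iterator β)
  | list (l : List Val) (β : BaseTy) :
      (∀ v ∈ l, ValHasBase v β) → ValHasBase (.list l) (.list β)

/-! ## Expressions and statements -/

/-- Arithmetic operators `⊕`. -/
inductive AOp : Type
  | add | sub | mul
  deriving DecidableEq

def AOp.eval : AOp → ℤ → ℤ → ℤ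
  | .add, a, b => a + b
  | .sub, a, b => a - b
  | .mul, a, b => a * b

/-- Comparison operators `⋈`. -/
inductive COp : Type
  | eq | le | lt
  deriving DecidableEq

def COp.holds : COp → ℤ → ℤ → Prop
  | .eq, a, b => a = b
  | .le, a, b => a ≤ b
  | .lt, a, b => a < b

def COp.evalB : COp → ℤ → ℤ → Bool
  | .eq, a, b => a == b
  | .le, a, b => decide (a ≤ b)
  | .lt, a, b => decide (a < b)

/-- Expressions of the core calculus. -/
inductive Expr : Type
  | int (n : ℤ)
  | bool (b : Bool)
  | var (x : String)
  | iterator (y : String)          -- y.iterator()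
  | newList (β : BaseTy)           -- new List⟨β⟩
  | arith (op : AOp) (e₁ e₂ : Expr)
  | comp (op : COp) (e₁ e₂ : Expr)
  | or (e₁ e₂ : Expr)
  | not (e : Expr)

/-- Statements.  Each statement carries its associated AST counter;
    `none` stands for the special ignored counter ⊥ used for auxiliary
    statements introduced during evaluation. -/
inductive Stmt : Type
  | assign (c : Option ℕ) (x : String) (e : Expr)     -- x = e
  | next (c : Option ℕ) (x z : String)                -- x = z.next()
  | remove (c : Option ℕ) (y : String)                -- y.remove()
  | add (c : Option ℕ) (y x : String)                 -- y.add(x)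
  | skip
  | block (c : Option ℕ) (ss : List Stmt)             -- { s₁; …; sₙ }
  | ite (c : Option ℕ) (e : Expr) (s₁ s₂ : Stmt)      -- if e then s₁ else s₂
  | whileLoop (c : Option ℕ) (e : Expr) (s : Stmt)    -- while e do s

/-- The AST counter associated with a statement (`getCnt`). -/
def Stmt.cnt : Stmt → Option ℕ
  | .assign c _ _ => c
  | .next c _ _ => c
  | .remove c _ => c
  | .add c _ _ => c
  | .skip => none
  | .block c _ => c
  | .ite c _ _ _ => c
  | .whileLoop c _ _ => c

/-- Replace the top-level AST counter of a statement (used for the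
    `newcnt`/⊥-marking of auxiliary statements). -/
def Stmt.setCnt (c : Option ℕ) : Stmt → Stmt
  | .assign _ x e => .assign c x e
  | .next _ x z => .next c x z
  | .remove _ y => .remove c y
  | .add _ y x => .add c y x
  | .skip => .skip
  | .block _ ss => .block c ss
  | .ite _ e s₁ s₂ => .ite c e s₁ s₂
  | .whileLoop _ e s => .whileLoop c e s

/-! ## Environments -/

/-- An environment maps program variables to values and AST counters to ℕ. -/
structure Env : Type where
  vars : String → Val
  cnt : ℕ → ℕ

def Env.setVar (σ : Env) (x : String) (v : Val) : Env :=
  { σ with vars := Function.update σ.vars x v }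

/-- Increment the given AST counter (a no-op for the ignored counter ⊥). -/
def Env.bump (σ : Env) : Option ℕ → Env
  | none => σ
  | some c => { σ with cnt := Function.update σ.cnt c (σ.cnt c + 1) }

/-! ## Operational semantics (paper Fig. 3) -/

/-- Evaluation of (side-effect free) expressions, `σ ⊢ e ⇓* v`. -/
inductive EvalExpr (σ : Env) : Expr → Val → Prop
  | int (n : ℤ) : EvalExpr σ (.int n) (.int n)
  | bool (b : Bool) : EvalExpr σ (.bool b) (.bool b)
  | var (x : String) : EvalExpr σ (.var x) (σ.vars x)
  | iterator (y : String) : EvalExpr σ (.iterator y) (.iter 0 y)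
  | newList (β : BaseTy) : EvalExpr σ (.newList β) (.list [])
  | arith {op : AOp} {e₁ e₂ : Expr} {n₁ n₂ : ℤ} :
      EvalExpr σ e₁ (.int n₁) → EvalExpr σ e₂ (.int n₂) →
      EvalExpr σ (.arith op e₁ e₂) (.int (op.eval n₁ n₂))
  | comp {op : COp} {e₁ e₂ : Expr} {n₁ n₂ : ℤ} :
      EvalExpr σ e₁ (.int n₁) → EvalExpr σ e₂ (.int n₂) →
      EvalExpr σ (.comp op e₁ e₂) (.bool (op.evalB n₁ n₂))
  | or {e₁ e₂ : Expr} {b₁ b₂ : Bool} :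
      EvalExpr σ e₁ (.bool b₁) → EvalExpr σ e₂ (.bool b₂) →
      EvalExpr σ (.or e₁ e₂) (.bool (b₁ || b₂))
  | not {e : Expr} {b : Bool} :
      EvalExpr σ e (.bool b) → EvalExpr σ (.not e) (.bool (!b))

/-- Small-step operational semantics `⟨σ, s⟩ → ⟨σ', s'⟩`.  Every step
    increments the AST counter of the statement being executed; auxiliary
    statements introduced during evaluation are marked with ⊥ (`none`). -/
inductive Step : Env → Stmt → Env → Stmt → Prop
  | assign {σ : Env} {c : Option ℕ} {x : String} {e : Expr} {v : Val} :
      EvalExpr σ e v →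
      Step σ (.assign c x e) ((σ.bump c).setVar x v) .skip
  | next {σ : Env} {c : Option ℕ} {x z y : String} {i : ℕ} {vs : List Val} :
      σ.vars z = .iter i y → σ.vars y = .list vs → i < vs.length - 1 →
      Step σ (.next c x z)
        ((((σ.bump c).setVar z (.iter (i + 1) y)).setVar x (vs.getD i (.int 0)))) .skip
  | remove {σ : Env} {c : Option ℕ} {y : String} {vs : List Val} {v : Val} :
      σ.vars y = .list (vs ++ [v]) →
      Step σ (.remove c y) ((σ.bump c).setVar y (.list vs)) .skip
  | add {σ : Env} {c : Option ℕ} {y x : String} {vs : List Val} :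
      σ.vars y = .list vs →
      Step σ (.add c y x) ((σ.bump c).setVar y (.list (vs ++ [σ.vars x]))) .skip
  | ifTrue {σ : Env} {c : Option ℕ} {e : Expr} {s₁ s₂ : Stmt} :
      EvalExpr σ e (.bool true) →
      Step σ (.ite c e s₁ s₂) (σ.bump c) s₁
  | ifFalse {σ : Env} {c : Option ℕ} {e : Expr} {s₁ s₂ : Stmt} :
      EvalExpr σ e (.bool false) →
      Step σ (.ite c e s₁ s₂) (σ.bump c) s₂
  | whileUnfold {σ : Env} {c : Option ℕ} {e : Expr} {s : Stmt} :
      Step σ (.whileLoop c e s) (σ.bump c)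
        (.ite none e (.block none [s, .whileLoop none e s]) .skip)
  | blockStep {σ σ' : Env} {c : Option ℕ} {s₁ s₁' : Stmt} {ss : List Stmt} :
      Step (σ.bump c) s₁ σ' s₁' →
      Step σ (.block c (s₁ :: ss)) σ' (.block none (s₁'.setCnt none :: ss))
  | blockSkip {σ : Env} {c : Option ℕ} {ss : List Stmt} :
      Step σ (.block c (.skip :: ss)) σ (.block none ss)

/-- Reflexive-transitive closure of the step relation, `⟨σ, s⟩ →* ⟨σ', s'⟩`. -/
inductive Steps : Env → Stmt → Env → Stmt → Prop
  | refl (σ : Env) (s : Stmt) : Steps σ s σ s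
  | tail {σ σ' σ'' : Env} {s s' s'' : Stmt} :
      Steps σ s σ' s' → Step σ' s' σ'' s'' → Steps σ s σ'' s''

/-! ## Refinements (paper Fig. 2b and Fig. 4) -/

/-- Refinement expressions: integer constants, `self`, integer variables,
    `len` of a list expression (`none` = self), `idx` of an iterator
    expression (`none` = self), AST counter variables, and linear arithmetic. -/
inductive RefExpr : Type
  | int (n : ℤ)
  | selfI                        -- self (as an integer)
  | var (x : String)
  | len (l : Option String)      -- len(self) / len(x)
  | idx (it : Option String)     -- idx(self) / idx(x)
  | cnt (c : ℕ)
  | add (e₁ e₂ : RefExpr)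
  | sub (e₁ e₂ : RefExpr)

/-- Refinements: boolean constants, boolean variables, `iterOf(y)`,
    comparisons, disjunction and negation. -/
inductive Refinement : Type
  | bool (b : Bool)
  | bvar (x : String)
  | iterOf (y : String)
  | comp (op : COp) (e₁ e₂ : RefExpr)
  | or (r₁ r₂ : Refinement)
  | not (r : Refinement)

/-- Evaluation of a refinement expression in environment `σ`, where the
    variable `x` interprets `self`. -/
def RefExpr.eval (σ : Env) (x : String) : RefExpr → ℤ
  | .int n => n
  | .selfI => (σ.vars x).asInt
  | .var y => (σ.vars y).asInt
  | .len none => (σ.vars x).lenZ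
  | .len (some y) => (σ.vars y).lenZ
  | .idx none => (σ.vars x).idxZ
  | .idx (some z) => (σ.vars z).idxZ
  | .cnt c => (σ.cnt c : ℤ)
  | .add e₁ e₂ => e₁.eval σ x + e₂.eval σ x
  | .sub e₁ e₂ => e₁.eval σ x - e₂.eval σ x

/-- Satisfaction `σ ⊨ (r, x)` (paper Fig. 4): variable `x` interprets `self`. -/
def RSat (σ : Env) (x : String) : Refinement → Prop
  | .bool b => b = true
  | .bvar y => (σ.vars y).asBool = true
  | .iterOf y => ∃ i : ℕ, σ.vars x = .iter i y
  | .comp op e₁ e₂ => op.holds (e₁.eval σ x) (e₂.eval σ x)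
  | .or r₁ r₂ => RSat σ x r₁ ∨ RSat σ x r₂
  | .not r => ¬ RSat σ x r

/-! ## Substitutions on refinements -/

/-- Apply a map to the atoms of a refinement expression. -/
def RefExpr.mapAtoms (f : RefExpr → RefExpr) : RefExpr → RefExpr
  | .add e₁ e₂ => .add (e₁.mapAtoms f) (e₂.mapAtoms f)
  | .sub e₁ e₂ => .sub (e₁.mapAtoms f) (e₂.mapAtoms f)
  | e => f e

/-- Map over a refinement: `fa` transforms refinement-expression atoms,
    `fb` boolean variables, `fi` `iterOf` predicates. -/
def Refinement.map (fa : RefExpr → RefExpr) (fb : String → Refinement)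
    (fi : String → Refinement) : Refinement → Refinement
  | .bool b => .bool b
  | .bvar y => fb y
  | .iterOf y => fi y
  | .comp op e₁ e₂ => .comp op (e₁.mapAtoms fa) (e₂.mapAtoms fa)
  | .or r₁ r₂ => .or (r₁.map fa fb fi) (r₂.map fa fb fi)
  | .not r => .not (r.map fa fb fi)

/-- Map only the refinement-expression atoms of a refinement. -/
def Refinement.mapE (fa : RefExpr → RefExpr) (r : Refinement) : Refinement :=
  r.map fa .bvar .iterOf

/-- The substitution `[w/self]` on refinement-expression atoms. -/
def aSelf (w : String) : RefExpr → RefExpr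
  | .selfI => .var w
  | .len none => .len (some w)
  | .idx none => .idx (some w)
  | e => e

/-- The substitution `r[w/self]`. -/
def Refinement.applySelf (w : String) (r : Refinement) : Refinement :=
  r.mapE (aSelf w)

/-- The substitution `[(c+1)/c]` on atoms. -/
def aBump (c : ℕ) : RefExpr → RefExpr
  | .cnt c' => if c' = c then .add (.cnt c) (.int 1) else .cnt c'
  | e => e

def aBumpO : Option ℕ → RefExpr → RefExpr
  | none => id
  | some c => aBump c

/-- The substitution `[(len(y)+d)/len(y)]` on atoms. -/
def aLenShift (y : String) (d : ℤ) : RefExpr → RefExpr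
  | .len (some y') => if y' = y then .add (.len (some y)) (.int d) else .len (some y')
  | e => e

/-- The substitution `[e'/len(y)]` on atoms. -/
def aLenSet (y : String) (e' : RefExpr) : RefExpr → RefExpr
  | .len (some y') => if y' = y then e' else .len (some y')
  | e => e

/-- The substitution `[0/idx(z)]` on atoms. -/
def aIdxSet0 (z : String) : RefExpr → RefExpr
  | .idx (some z') => if z' = z then .int 0 else .idx (some z')
  | e => e

/-- The substitution `[(idx(z)+1)/idx(z)]` on atoms. -/
def aIdxShift (z : String) : RefExpr → RefExpr
  | .idx (some z') => if z' = z then .add (.idx (some z)) (.int 1) else .idx (some z')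
  | e => e

/-- Translation of a program expression into a refinement expression. -/
def Expr.toRef : Expr → RefExpr
  | .int n => .int n
  | .var x => .var x
  | .arith .add e₁ e₂ => .add e₁.toRef e₂.toRef
  | .arith .sub e₁ e₂ => .sub e₁.toRef e₂.toRef
  | _ => .int 0

/-- The substitution `[e/x]` on atoms (for `T-Assign`): `x` becomes `e`
    and `idx(x)` becomes `idx(e)`. -/
def aAssign (x : String) (e : Expr) : RefExpr → RefExpr
  | .var x' => if x' = x then e.toRef else .var x'
  | .idx (some x') =>
      if x' = x then (match e with | .var z => .idx (some z) | _ => .idx (some x)) else .idx (some x')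
  | a => a

/-- The substitution `[e/x]` on boolean variables. -/
def bAssign (x : String) (e : Expr) (x' : String) : Refinement :=
  if x' = x then
    match e with
    | .var z => .bvar z
    | .bool b => .bool b
    | _ => .bvar x'
  else .bvar x'

/-- The substitution `[(len(y)+1)/len(y), (c+1)/c]` of rule `T-Add`. -/
def addSubst (y : String) (c : Option ℕ) (r : Refinement) : Refinement :=
  r.mapE (fun a => aBumpO c (aLenShift y 1 a))

/-- The substitution `[(len(y)−1)/len(y), (c+1)/c]` of rule `T-Remove`. -/
def removeSubst (y : String) (c : Option ℕ) (r : Refinement) : Refinement :=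
  r.mapE (fun a => aBumpO c (aLenShift y (-1) a))

/-- The substitution `[(idx(z)+1)/idx(z), (c+1)/c]` of rule `T-Next`. -/
def nextSubst (z : String) (c : Option ℕ) (r : Refinement) : Refinement :=
  r.mapE (fun a => aBumpO c (aIdxShift z a))

/-- The substitution `[0/idx(z), (c+1)/c]` of rule `T-AssignIter`. -/
def iterSubst (z : String) (c : Option ℕ) (r : Refinement) : Refinement :=
  r.mapE (fun a => aBumpO c (aIdxSet0 z a))

/-- The substitution `[0/len(x), (c+1)/c]` of rule `T-AssignNewList`. -/
def newListSubst (x : String) (c : Option ℕ) (r : Refinement) : Refinement :=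
  r.mapE (fun a => aBumpO c (aLenSet x (.int 0) a))

/-- `len(e)` for a list-typed program expression. -/
def lenRef : Expr → RefExpr
  | .var y => .len (some y)
  | _ => .int 0

/-- The substitution `[len(e)/len(x), (c+1)/c]` of rule `T-AssignList`. -/
def assignListSubst (x : String) (e : Expr) (c : Option ℕ) (r : Refinement) : Refinement :=
  r.mapE (fun a => aBumpO c (aLenSet x (lenRef e) a))

/-- The substitution `[e/x, (c+1)/c]` of rule `T-Assign`. -/
def assignSubst (x : String) (e : Expr) (c : Option ℕ) (r : Refinement) : Refinement :=
  r.map (fun a => aBumpO c (aAssign x e a)) (bAssign x e) .iterOf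

/-- The substitution `[(c+1)/c]` of rule `T-Counter`. -/
def cntSubst (c : Option ℕ) (r : Refinement) : Refinement :=
  r.mapE (aBumpO c)

/-- The substitution `[iterOf(y)/iterOf(*)]` of rule `T-AssignIter`. -/
def iterWild (y : String) (r : Refinement) : Refinement :=
  r.map id .bvar (fun _ => .iterOf y)

/-! ## Refinement types, contexts and type checking (paper Fig. 5) -/

/-- A refinement type `{β | r}`. -/
structure RTy : Type where
  base : BaseTy
  ref : Refinement

/-- A typing context maps variables to refinement types. -/
def Ctx : Type := String → Option RTy

/-- `Γ ⊨ σ`: every variable conforms to its base type and refinement. -/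
def WellTyped (Γ : Ctx) (σ : Env) : Prop :=
  ∀ x τ, Γ x = some τ → ValHasBase (σ.vars x) τ.base ∧ RSat σ x τ.ref

/-- The subtyping premise used in the type-checking rules: for every
    `(w : τ_w) ∈ Γ` the implication from the refinement of `τ_w[w/self]` to
    the refinement of `f (τ_w[w/self])` is valid (holds in all environments). -/
def SubValid (Γ : Ctx) (f : Refinement → Refinement) : Prop :=
  ∀ w τ, Γ w = some τ → ∀ σ : Env,
    RSat σ w (τ.ref.applySelf w) → RSat σ w (f (τ.ref.applySelf w))

/-- `r` is logically equivalent to its existential quantification over `x`,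
    `r ⟺ ∃x. r` (premise of rule `T-Next`). -/
def ExistsEquiv (x : String) (r : Refinement) : Prop :=
  ∀ (σ : Env) (w : String), RSat σ w r ↔ ∃ v : Val, RSat (σ.setVar x v) w r

/-- The refinement type-checking judgment `Γ ⊢ s` of paper Fig. 5. -/
inductive TyCheck (Γ : Ctx) : Stmt → Prop
  | add {c : Option ℕ} {y x : String} :
      SubValid Γ (addSubst y c) →
      TyCheck Γ (.add c y x)
  | remove {c : Option ℕ} {y : String} :
      SubValid Γ (removeSubst y c) →
      TyCheck Γ (.remove c y)
  | next {c : Option ℕ} {x z : String} :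
      SubValid Γ (nextSubst z c) →
      (∀ w τ, Γ w = some τ → ExistsEquiv x τ.ref) →
      TyCheck Γ (.next c x z)
  | assignIter {c : Option ℕ} {z y : String} {τz : RTy} :
      Γ z = some τz →
      SubValid Γ (iterSubst z c) →
      (∀ σ : Env, RSat σ z (τz.ref.applySelf z) →
        RSat σ z (iterWild y (iterSubst z c (τz.ref.applySelf z)))) →
      TyCheck Γ (.assign c z (.iterator y))
  | assignNewList {c : Option ℕ} {x : String} {β : BaseTy} :
      SubValid Γ (newListSubst x c) →
      TyCheck Γ (.assign c x (.newList β))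
  | assign {c : Option ℕ} {x : String} {e : Expr} {τx : RTy} :
      Γ x = some τx →
      (∀ β, τx.base ≠ .list β) →
      (∀ y, e ≠ .iterator y) → (∀ β, e ≠ .newList β) →
      SubValid Γ (assignSubst x e c) →
      TyCheck Γ (.assign c x e)
  | assignList {c : Option ℕ} {x : String} {e : Expr} {τx : RTy} {β : BaseTy} :
      Γ x = some τx →
      τx.base = .list β →
      (∀ y, e ≠ .iterator y) → (∀ β', e ≠ .newList β') →
      SubValid Γ (assignListSubst x e c) →
      TyCheck Γ (.assign c x e)
  | skip : TyCheck Γ .skip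
  | block {c : Option ℕ} {ss : List Stmt} :
      SubValid Γ (cntSubst c) →
      (∀ s ∈ ss, TyCheck Γ s) →
      TyCheck Γ (.block c ss)
  | ite {c : Option ℕ} {e : Expr} {s₁ s₂ : Stmt} :
      SubValid Γ (cntSubst c) →
      TyCheck Γ s₁ → TyCheck Γ s₂ →
      TyCheck Γ (.ite c e s₁ s₂)
  | whileLoop {c : Option ℕ} {e : Expr} {s : Stmt} :
      SubValid Γ (cntSubst c) →
      TyCheck Γ s →
      TyCheck Γ (.whileLoop c e s)

/-! ## Methods, initial environments, reachability -/

/-- A method: input declarations `τ u`, initialized local declarations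
    `τ x = e`, and a body. -/
structure Method : Type where
  inputs : List (String × RTy)
  locals : List (String × RTy × Expr)
  body : Stmt

/-- The typing context induced by the declarations of a method. -/
def Method.ctx (M : Method) : Ctx := fun x =>
  (M.inputs ++ M.locals.map (fun p => (p.1, p.2.1))).lookup x

/-- `σ₀` is an initial environment of `M`: all AST counters are zero,
    locals hold the values of their initializers, and the inputs satisfy
    their declared refinement types. -/
def Init (M : Method) (σ₀ : Env) : Prop :=
  (∀ c, σ₀.cnt c = 0) ∧
  (∀ p ∈ M.locals, EvalExpr σ₀ p.2.2 (σ₀.vars p.1)) ∧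
  (∀ p ∈ M.inputs, ValHasBase (σ₀.vars p.1) p.2.base ∧ RSat σ₀ p.1 p.2.ref)

/-- `σ ∈ Reach(M)`: `⟨σ_init, M⟩ →* ⟨σ, s⟩` for some statement `s`. -/
def Reach (M : Method) (σ : Env) : Prop :=
  ∃ σ₀ s, Init M σ₀ ∧ Steps σ₀ M.body σ s

/-- `Γ ⊢ M` (rule `T-Decl`): the body type checks under the declared
    context and the initial values of the locals conform to their types. -/
def MethodTyCheck (M : Method) : Prop :=
  TyCheck M.ctx M.body ∧
  ∀ σ₀, Init M σ₀ → ∀ p ∈ M.locals,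
    ValHasBase (σ₀.vars p.1) p.2.1.base ∧ RSat σ₀ p.1 p.2.1.ref

/-! ## AST counter axioms (paper Sec. 4.2) and constraint extraction (Fig. 6) -/

/-- Conjunction of refinements (encoded with `or`/`not`). -/
def rAnd (r₁ r₂ : Refinement) : Refinement := .not (.or (.not r₁) (.not r₂))

def rConj : List Refinement → Refinement
  | [] => .bool true
  | r :: rs => rAnd r (rConj rs)

/-- Axiom relating the counters of two consecutive statements of a block:
    `cᵢ = cᵢ₊₁ ∨ cᵢ = cᵢ₊₁ + 1`. -/
def adjAxiom (s₁ s₂ : Stmt) : Refinement :=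
  match s₁.cnt, s₂.cnt with
  | some c₁, some c₂ =>
      .or (.comp .eq (.cnt c₁) (.cnt c₂))
          (.comp .eq (.cnt c₁) (.add (.cnt c₂) (.int 1)))
  | _, _ => .bool true

def adjAxioms : List Stmt → Refinement
  | s₁ :: s₂ :: rest => rAnd (adjAxiom s₁ s₂) (adjAxioms (s₂ :: rest))
  | _ => .bool true

/-- Axiom `c₀ = c₁` relating a block's counter with its first statement's. -/
def headAxiom (c : Option ℕ) : List Stmt → Refinement
  | s₁ :: _ =>
      match c, s₁.cnt with
      | some c₀, some c₁ => .comp .eq (.cnt c₀) (.cnt c₁)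
      | _, _ => .bool true
  | [] => .bool true

/-- Axiom for conditionals: `c₀ = c₁ + c₂ ∨ c₀ = c₁ + c₂ + 1`. -/
def iteAxiom (c : Option ℕ) (s₁ s₂ : Stmt) : Refinement :=
  match c, s₁.cnt, s₂.cnt with
  | some c₀, some c₁, some c₂ =>
      .or (.comp .eq (.cnt c₀) (.add (.cnt c₁) (.cnt c₂)))
          (.comp .eq (.cnt c₀) (.add (.add (.cnt c₁) (.cnt c₂)) (.int 1)))
  | _, _, _ => .bool true

mutual
/-- The AST counter relation axioms `R(s)` of paper Sec. 4.2. -/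
def counterAxioms : Stmt → Refinement
  | .block c ss => rAnd (headAxiom c ss) (rAnd (adjAxioms ss) (counterAxiomsList ss))
  | .ite c _ s₁ s₂ => rAnd (iteAxiom c s₁ s₂) (rAnd (counterAxioms s₁) (counterAxioms s₂))
  | .whileLoop _ _ s => counterAxioms s
  | _ => .bool true

def counterAxiomsList : List Stmt → Refinement
  | [] => .bool true
  | s :: rest => rAnd (counterAxioms s) (counterAxiomsList rest)
end

/-- The helper function `Φ(x : τ)` of paper Fig. 6, extracting the
    refinement constraint of a type with `x` substituted for `self`
    (with `iterOf(y)` yielding `0 ≤ idx(x) ≤ len(y)`). -/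
def Phi (x : String) (τ : RTy) : Refinement :=
  match τ.ref with
  | .iterOf y =>
      rAnd (.comp .le (.int 0) (.idx (some x)))
           (.comp .le (.idx (some x)) (.len (some y)))
  | r => r.applySelf x

/-- `C_AST ∧ ⋀_{u:τ input} Φ(u:τ) ∧ ⋀_{x:τ local} Φ(x:τ)`. -/
def methodConstraint (M : Method) : Refinement :=
  rAnd (counterAxioms M.body)
    (rAnd (rConj (M.inputs.map fun p => Phi p.1 p.2))
          (rConj (M.locals.map fun p => Phi p.1 p.2.1)))

/-! ## Occurrence of statements in a method body -/

/-- `Occurs s t`: `s` occurs in (is a reflexive-transitive AST sub-node of) `t`. -/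
inductive Occurs : Stmt → Stmt → Prop
  | refl (s : Stmt) : Occurs s s
  | block {s s' : Stmt} {c : Option ℕ} {ss : List Stmt} :
      s' ∈ ss → Occurs s s' → Occurs s (.block c ss)
  | iteLeft {s : Stmt} {c : Option ℕ} {e : Expr} {s₁ s₂ : Stmt} :
      Occurs s s₁ → Occurs s (.ite c e s₁ s₂)
  | iteRight {s : Stmt} {c : Option ℕ} {e : Expr} {s₁ s₂ : Stmt} :
      Occurs s s₂ → Occurs s (.ite c e s₁ s₂)
  | whileBody {s : Stmt} {c : Option ℕ} {e : Expr} {b : Stmt} :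
      Occurs s b → Occurs s (.whileLoop c e b)

/-- `OccursOutsideLoops s t`: `s` occurs in `t` without being (transitively)
    contained in any while loop. -/
inductive OccursOutsideLoops : Stmt → Stmt → Prop
  | refl (s : Stmt) : OccursOutsideLoops s s
  | block {s s' : Stmt} {c : Option ℕ} {ss : List Stmt} :
      s' ∈ ss → OccursOutsideLoops s s' → OccursOutsideLoops s (.block c ss)
  | iteLeft {s : Stmt} {c : Option ℕ} {e : Expr} {s₁ s₂ : Stmt} :
      OccursOutsideLoops s s₁ → OccursOutsideLoops s (.ite c e s₁ s₂)
  | iteRight {s : Stmt} {c : Option ℕ} {e : Expr} {s₁ s₂ : Stmt} :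
      OccursOutsideLoops s s₂ → OccursOutsideLoops s (.ite c e s₁ s₂)

mutual
/-- All AST counters occurring in a statement. -/
def Stmt.counters : Stmt → List ℕ
  | .block c ss => c.toList ++ countersList ss
  | .ite c _ s₁ s₂ => c.toList ++ s₁.counters ++ s₂.counters
  | .whileLoop c _ s => c.toList ++ s.counters
  | s => s.cnt.toList

def countersList : List Stmt → List ℕ
  | [] => []
  | s :: rest => s.counters ++ countersList rest
end

/-- Well-formed counter assignment: every AST node of the method body has
    its own distinct counter. -/
def WFCounters (M : Method) : Prop := M.body.counters.Nodup

/-- Applying a substitution to every refinement in a typing context. -/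
def Ctx.mapRef (Γ : Ctx) (f : Refinement → Refinement) : Ctx :=
  fun x => (Γ x).map fun τ => ⟨τ.base, f τ.ref⟩


/-- `[w/self]` does not change the value when `w` interprets `self`. -/
theorem eval_applySelf (σ : Env) (w : String) (e : RefExpr) :
    (e.mapAtoms (aSelf w)).eval σ w = e.eval σ w := by
  induction e with
  | add e₁ e₂ h₁ h₂ => simp only [RefExpr.mapAtoms, RefExpr.eval, h₁, h₂]
  | sub e₁ e₂ h₁ h₂ => simp only [RefExpr.mapAtoms, RefExpr.eval, h₁, h₂]
  | len l => cases l <;> rfl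
  | idx l => cases l <;> rfl
  | _ => rfl

theorem rsat_applySelf (σ : Env) (w : String) (r : Refinement) :
    RSat σ w (r.applySelf w) ↔ RSat σ w r := by
  unfold Refinement.applySelf Refinement.mapE
  induction r with
  | comp op e₁ e₂ => simp only [Refinement.map, RSat, eval_applySelf]
  | or r₁ r₂ h₁ h₂ => simp only [Refinement.map, RSat, h₁, h₂]
  | not r h => simp only [Refinement.map, RSat, h]
  | _ => rfl

/-- Substitution lemma for expressions; `[w/self]` comes first so that `len(self)` is also
shifted when `w` is `y`. -/
theorem eval_removeSubst (σ : Env) (y w : String) (c : ℕ) (vs : List Val) (v : Val)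
    (hy : σ.vars y = .list (vs ++ [v])) (e : RefExpr) :
    ((e.mapAtoms (aSelf w)).mapAtoms (fun a => aBumpO (some c) (aLenShift y (-1) a))).eval σ w =
      e.eval ((σ.bump (some c)).setVar y (.list vs)) w := by
  have hlen : ∀ z, (RefExpr.eval σ w (aBump c (aLenShift y (-1) (.len (some z))))) =
      (Function.update σ.vars y (.list vs) z).lenZ := by
    intro z
    by_cases hz : z = y
    · subst hz
      simp [aLenShift, aBump, RefExpr.eval, hy, Val.lenZ]
    · simp [aLenShift, aBump, RefExpr.eval, hz]
  have hidx : ∀ z, (σ.vars z).idxZ = (Function.update σ.vars y (.list vs) z).idxZ := by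
    intro z
    by_cases hz : z = y
    · subst hz
      simp [hy, Val.idxZ]
    · simp [hz]
  have hint : ∀ z, (σ.vars z).asInt = (Function.update σ.vars y (.list vs) z).asInt := by
    intro z
    by_cases hz : z = y
    · subst hz
      simp [hy, Val.asInt]
    · simp [hz]
  induction e with
  | add e₁ e₂ h₁ h₂ => simp only [RefExpr.mapAtoms, RefExpr.eval, h₁, h₂]
  | sub e₁ e₂ h₁ h₂ => simp only [RefExpr.mapAtoms, RefExpr.eval, h₁, h₂]
  | int n => rfl
  | selfI => exact hint w
  | var z => exact hint z
  | len l => cases l <;> exact hlen _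
  | idx l => cases l <;> exact hidx _
  | cnt d =>
    by_cases hd : d = c
    · subst hd
      simp [RefExpr.mapAtoms, aSelf, aLenShift, aBumpO, aBump, RefExpr.eval, Env.bump, Env.setVar]
    · simp [RefExpr.mapAtoms, aSelf, aLenShift, aBumpO, aBump, RefExpr.eval, Env.bump,
        Env.setVar, hd]

theorem rsat_removeSubst (σ : Env) (y w : String) (c : ℕ) (vs : List Val) (v : Val)
    (hy : σ.vars y = .list (vs ++ [v])) (r : Refinement) :
    RSat σ w (removeSubst y (some c) (r.applySelf w)) ↔
      RSat ((σ.bump (some c)).setVar y (.list vs)) w r := by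
  unfold removeSubst Refinement.applySelf Refinement.mapE
  induction r with
  | bool b => rfl
  | bvar z =>
    by_cases hz : z = y
    · subst hz
      simp [Refinement.map, RSat, Env.setVar, hy, Val.asBool]
    · simp [Refinement.map, RSat, Env.setVar, Env.bump, hz]
  | iterOf z =>
    by_cases hw : w = y
    · subst hw
      simp [Refinement.map, RSat, Env.setVar, hy]
    · simp [Refinement.map, RSat, Env.setVar, Env.bump, hw]
  | comp op e₁ e₂ =>
    simp only [Refinement.map, RSat, eval_removeSubst σ y w c vs v hy]
  | or r₁ r₂ h₁ h₂ => simp only [Refinement.map, RSat, h₁, h₂]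
  | not r h => simp only [Refinement.map, RSat, h]

/-- **Preservation for remove (the E-Remove case of Theorem 1).**
If `Γ ⊨ σ`, `y.remove()` type checks by rule `T-Remove`, `σ(y)` is a
nonempty list, and `⟨σ, y.remove()⟩ → ⟨σ', skip⟩` by rule `E-Remove`,
then `Γ ⊨ σ'`. -/
theorem preservation_remove (Γ : Ctx) (σ σ' : Env) (y : String) (c : ℕ)
    (hwt : WellTyped Γ σ)
    (hsub : SubValid Γ (removeSubst y (some c)))
    (hne : ∃ vs v, σ.vars y = Val.list (vs ++ [v]))
    (hstep : Step σ (.remove (some c) y) σ' .skip) :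
    WellTyped Γ σ' := by
  cases hstep with
  | remove hy =>
    rename_i vs v
    intro x τ hx
    obtain ⟨hb, hr⟩ := hwt x τ hx
    refine ⟨?_, (rsat_removeSubst σ y x c vs v hy τ.ref).1
      (hsub x τ hx σ ((rsat_applySelf σ x τ.ref).2 hr))⟩
    by_cases hxy : x = y
    · subst hxy
      rw [hy] at hb
      simp only [Env.setVar, Function.update_self]
      generalize τ.base = β at hb
      cases hb with
      | list _ β h => exact .list _ _ fun u hu => h u (List.mem_append_left _ hu)
    · simpa [Env.setVar, Env.bump, hxy] using hb

end QuantmBound
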